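/- Let λ = (λ_1,…,λ_k) and μ = (μ_1,…,μ_{k−1}) be partitions that interlace, i.e., λ_i ≥ μ_i ≥ λ_{i+1} for all 1 ≤ i ≤ k−1. For 1 ≤ i ≤ k define integer sequences λ^i = (λ^i_1,…,λ^i_k) and μ^i = (μ^i_1,…,μ^i_{k−1}) by λ^i_j := μ_j − 1 if j < i, λ^i_i := λ_i, λ^i_j := μ_{j−1} if j > i; and μ^i_j := λ_j + 1 if j < i, μ^i_j := λ_{j+1} if j ≥ i. Then for every n ≥ 1, as polynomials in x_1,…,x_n: s^{[n]}_λ · s^{[n]}_μ = Σ_{i=1}^{k} s^{[n]}_{λ^i} · s^{[n]}_{μ^i}, where s^{[n]}_α := 0 if the sequence α is not a partition. -/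

import Mathlib

/-- A semistandard Young tableau of shape `(lam 0, lam 1, …, lam (k-1))` (so `lam i` is the
length of the `(i+1)`-st row), with entries in `{a, a+1, …, b}`: rows weakly increase,
columns strictly increase.  Entries outside the shape are `0`. -/
structure SSYT (k : ℕ) (lam : ℕ → ℤ) (a b : ℕ) where
  entry : ℕ → ℕ → ℕ
  zero_outside : ∀ i j : ℕ, ¬(i < k ∧ (j : ℤ) < lam i) → entry i j = 0
  lower : ∀ i j : ℕ, i < k → (j : ℤ) < lam i → a ≤ entry i j
  upper : ∀ i j : ℕ, i < k → (j : ℤ) < lam i → entry i j ≤ b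
  row_weak : ∀ i j₁ j₂ : ℕ, i < k → j₁ ≤ j₂ → (j₂ : ℤ) < lam i → entry i j₁ ≤ entry i j₂
  col_strict : ∀ i₁ i₂ j : ℕ, i₁ < i₂ → i₂ < k → (j : ℤ) < lam i₂ → entry i₁ j < entry i₂ j

/-- The monomial `Π_i x_i^{m(i,T)}` of a tableau: the product of `x_{T(c)}` over the
cells `c` of the shape. -/
noncomputable def SSYT.weight {k : ℕ} {lam : ℕ → ℤ} {a b : ℕ} (T : SSYT k lam a b) :
    MvPolynomial ℕ ℤ :=
  ∏ i ∈ Finset.range k, ∏ j ∈ Finset.range (lam i).toNat, MvPolynomial.X (T.entry i j)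

/-- `(lam 0, …, lam (k-1))` is a partition: weakly decreasing with nonnegative entries. -/
def IsPartitionSeq (k : ℕ) (lam : ℕ → ℤ) : Prop :=
  (∀ i, i + 1 < k → lam (i + 1) ≤ lam i) ∧ (∀ i, i < k → 0 ≤ lam i)

/-- The Schur polynomial `s^{[a,b]}_lam = Σ_T Π_i x_i^{m(i,T)}`, the sum running over all
semistandard Young tableaux of shape `lam` with entries in `{a,…,b}`; by convention it is
`0` if `lam` is not a partition. -/
noncomputable def schur (k : ℕ) (lam : ℕ → ℤ) (a b : ℕ) : MvPolynomial ℕ ℤ :=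
  letI := Classical.dec (IsPartitionSeq k lam)
  if IsPartitionSeq k lam then ∑ᶠ T : SSYT k lam a b, T.weight else 0

/-!
Removing the largest letter `b + 1` from a tableau of shape `λ` leaves a tableau of a shape `v` that
interlaces `(λ, 0)`. The Jacobi–Trudi determinant `det (h_{λ_i - i + j})` obeys the same recursion:
since `h_m[a, b + 1] = h_m[a, b] + x_{b + 1} h_{m - 1}[a, b + 1]`, subtracting from each row a
multiple of the next one leaves in row `i` a sum over the values of `v_i` allowed by interlacing,
and the determinant is multilinear in its rows. Hence `s_λ = det (h_{λ_i - i + j})`.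

Enlarge the Jacobi–Trudi matrix of `μ` by one column on the left. Moving row `i` from the matrix of
`λ` into it gives the matrix of `λ^i`; what remains of the matrix of `λ`, without its first column,
is the matrix of `μ^i`. So the theorem is a Plücker relation. If `λ^i` is not a partition, then
`μ_{i-1} = λ_i`, and its matrix has two equal rows, in accordance with `s_{λ^i} = 0`.
-/

open Finset MvPolynomial

section CompleteHomogeneous

variable {σ : Type*} [DecidableEq σ] (R : Type*) [CommSemiring R]

/-- The complete homogeneous polynomial `h_m` in the variables `X i`, `i ∈ s`. The index `m` is an
integer, with `h_m = 0` for `m < 0`, as in the entries of a Jacobi–Trudi matrix. -/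
noncomputable def completeHomogeneous (s : Finset σ) (m : ℤ) : MvPolynomial σ R :=
  if 0 ≤ m then ∑ t ∈ s.sym m.toNat, (t.1.map X).prod else 0

lemma completeHomogeneous_of_neg (s : Finset σ) {m : ℤ} (hm : m < 0) :
    completeHomogeneous R s m = 0 :=
  if_neg hm.not_ge

lemma completeHomogeneous_natCast (s : Finset σ) (m : ℕ) :
    completeHomogeneous R s m = ∑ t ∈ s.sym m, (t.1.map X).prod :=
  if_pos m.cast_nonneg

lemma completeHomogeneous_zero (s : Finset σ) : completeHomogeneous R s 0 = 1 :=
  (completeHomogeneous_natCast R s 0).trans (by rw [sym_zero, sum_singleton]; rfl)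

lemma completeHomogeneous_empty (m : ℤ) :
    completeHomogeneous R (∅ : Finset σ) m = if m = 0 then 1 else 0 := by
  rcases lt_trichotomy m 0 with hm | rfl | hm
  · rw [completeHomogeneous_of_neg R _ hm, if_neg hm.ne]
  · rw [completeHomogeneous_zero, if_pos rfl]
  · obtain ⟨n, rfl⟩ : ∃ n : ℕ, m = (n + 1 : ℕ) := ⟨m.toNat - 1, by lia⟩
    rw [completeHomogeneous_natCast, sym_empty, sum_empty, if_neg hm.ne']

lemma sym_insert_succ_filter_mem (s : Finset σ) (c : σ) (n : ℕ) :
    {t ∈ (insert c s).sym (n + 1) | c ∈ t} = ((insert c s).sym n).image (c ::ₛ ·) := by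
  ext t
  simp only [mem_filter, mem_sym_iff, mem_image]
  constructor
  · rintro ⟨ht, hc⟩
    rw [← Sym.cons_erase hc] at ht
    exact ⟨t.erase c hc, fun i hi => ht i (Sym.mem_cons_of_mem hi), Sym.cons_erase hc⟩
  · rintro ⟨u, hu, rfl⟩
    refine ⟨fun i hi => ?_, Sym.mem_cons_self c u⟩
    rcases Sym.mem_cons.1 hi with rfl | hi
    exacts [mem_insert_self _ _, hu i hi]

lemma sym_insert_filter_notMem {s : Finset σ} {c : σ} (hc : c ∉ s) (n : ℕ) :
    {t ∈ (insert c s).sym n | c ∉ t} = s.sym n := by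
  ext t
  simp only [mem_filter, mem_sym_iff, mem_insert]
  constructor
  · rintro ⟨ht, hct⟩ i hi
    exact (ht i hi).resolve_left fun h => hct (h ▸ hi)
  · exact fun ht => ⟨fun i hi => Or.inr (ht i hi), fun hct => hc (ht c hct)⟩

lemma completeHomogeneous_insert {s : Finset σ} {c : σ} (hc : c ∉ s) (m : ℤ) :
    completeHomogeneous R (insert c s) m =
      completeHomogeneous R s m + X c * completeHomogeneous R (insert c s) (m - 1) := by
  rcases lt_trichotomy m 0 with hm | rfl | hm
  · simp [completeHomogeneous_of_neg, hm, hm.trans zero_lt_one]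
  · simp [completeHomogeneous_of_neg, completeHomogeneous_zero]
  · obtain ⟨n, rfl⟩ : ∃ n : ℕ, m = (n + 1 : ℕ) := ⟨m.toNat - 1, by lia⟩
    rw [show ((n + 1 : ℕ) : ℤ) - 1 = n by push_cast; ring]
    simp only [completeHomogeneous_natCast]
    rw [← sum_filter_not_add_sum_filter _ (c ∈ ·), sym_insert_filter_notMem hc,
      sym_insert_succ_filter_mem, sum_image fun _ _ _ _ => Sym.cons_inj_right _ _ _ |>.1, mul_sum]
    simp only [Sym.val_eq_coe, Sym.coe_cons, Multiset.map_cons, Multiset.prod_cons]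

end CompleteHomogeneous

section Determinant

variable {R : Type*} [CommRing R]

lemma det_eq_of_forall_row_eq_smul_add_succ {n : ℕ} {A B : Matrix (Fin (n + 1)) (Fin (n + 1)) R}
    (c : Fin n → R) (A_last : ∀ j, A (Fin.last n) j = B (Fin.last n) j)
    (A_castSucc : ∀ (i : Fin n) (j), A i.castSucc j = B i.castSucc j + c i * A i.succ j) :
    A.det = B.det := by
  rw [← Matrix.det_submatrix_equiv_self Fin.revPerm A,
    ← Matrix.det_submatrix_equiv_self Fin.revPerm B]
  refine Matrix.det_eq_of_forall_row_eq_smul_add_pred (fun i => c i.rev) (fun j => ?_)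
    fun i j => ?_
  · simpa using A_last j.rev
  · simpa [Fin.rev_succ, Fin.rev_castSucc] using A_castSucc i.rev j.rev

lemma det_of_sum_rows {k : ℕ} {α : Type*} (s : Fin k → Finset α) (f : Fin k → α → Fin k → R) :
    (Matrix.of fun i => ∑ t ∈ s i, f i t).det =
      ∑ v ∈ Fintype.piFinset s, (Matrix.of fun i => f i (v i)).det :=
  Matrix.detRowAlternating.toMultilinearMap.map_sum_finset f s

/-- Expand each `det (B with row i of A inserted)` along that row: summing against the cofactors of
column `p` of `A` then leaves only the minor of `B` without column `p`. -/
lemma det_mul_det_submatrix_succAbove {m : ℕ} (A : Matrix (Fin (m + 1)) (Fin (m + 1)) R)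
    (B : Fin m → Fin (m + 1) → R) (p : Fin (m + 1)) :
    A.det * ((Matrix.of B).submatrix id p.succAbove).det =
      ∑ i : Fin (m + 1), (Matrix.of (i.insertNth (A.row i) B)).det *
        (A.submatrix i.succAbove p.succAbove).det := by
  have cofactor_expansion (j : Fin (m + 1)) :
      ∑ i, A.adjugate p i * A i j = if j = p then A.det else 0 := by
    simpa [Matrix.mul_apply, Matrix.one_apply, eq_comm] using
      congrFun (congrFun (Matrix.adjugate_mul A) p) j
  have row_expansion (i : Fin (m + 1)) :
      (Matrix.of (i.insertNth (A.row i) B)).det =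
        ∑ j : Fin (m + 1), (-1) ^ (i + j : ℕ) * A i j *
          ((Matrix.of B).submatrix id j.succAbove).det := by
    rw [Matrix.det_succ_row _ i]
    refine sum_congr rfl fun j _ => ?_
    have minor : (Matrix.of (i.insertNth (A.row i) B)).submatrix i.succAbove j.succAbove =
        (Matrix.of B).submatrix id j.succAbove := by
      ext r c
      simp
    rw [minor, Matrix.of_apply, Fin.insertNth_apply_same, Matrix.row_apply]
  calc A.det * ((Matrix.of B).submatrix id p.succAbove).det
      = ∑ j : Fin (m + 1), (-1) ^ (p + j : ℕ) * ((Matrix.of B).submatrix id j.succAbove).det *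
          ∑ i, A.adjugate p i * A i j := by
        simp_rw [cofactor_expansion]
        simp [← two_mul, mul_comm]
    _ = ∑ i : Fin (m + 1), ∑ j : Fin (m + 1), (-1) ^ (i + j : ℕ) * A i j *
          ((Matrix.of B).submatrix id j.succAbove).det *
            (A.submatrix i.succAbove p.succAbove).det := by
        simp_rw [mul_sum]
        rw [sum_comm]
        refine sum_congr rfl fun i _ => sum_congr rfl fun j _ => ?_
        rw [Matrix.adjugate_fin_succ_eq_det_submatrix]
        have sign : (-1 : R) ^ (p : ℕ) * (-1) ^ (p : ℕ) = 1 := by simp [← mul_pow]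
        simp only [pow_add]
        linear_combination (-1) ^ (i : ℕ) * (-1) ^ (j : ℕ) * A i j *
          ((Matrix.of B).submatrix id j.succAbove).det *
            (A.submatrix i.succAbove p.succAbove).det * sign
    _ = _ := by simp_rw [row_expansion, sum_mul]

end Determinant

section Interlacing

/-- The interlacing condition `λ_i ≥ μ_i ≥ λ_{i+1}` for `i < m`. -/
def Interlaces (m : ℕ) (lam mu : ℕ → ℤ) : Prop :=
  ∀ i < m, mu i ≤ lam i ∧ lam (i + 1) ≤ mu i

variable {k m : ℕ} {lam mu : ℕ → ℤ}

lemma IsPartitionSeq.le_of_le (hlam : IsPartitionSeq k lam) {i j : ℕ} (hij : i ≤ j) (hj : j < k) :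
    lam j ≤ lam i := by
  induction j, hij using Nat.le_induction with
  | base => rfl
  | succ j _ ih => exact (hlam.1 j hj).trans (ih (by lia))

lemma isPartitionSeq_succ_of_last_nonneg (hlam : ∀ i < m, lam (i + 1) ≤ lam i)
    (hlast : 0 ≤ lam m) : IsPartitionSeq (m + 1) lam := by
  refine ⟨fun i hi => hlam i (by lia), fun i hi => ?_⟩
  induction Nat.le_of_lt_succ hi using Nat.decreasingInduction with
  | self => exact hlast
  | of_succ i him ih => exact (ih (by lia)).trans (hlam i him)

lemma Interlaces.isPartitionSeq_left (h : Interlaces m lam mu) (hlast : 0 ≤ lam m) :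
    IsPartitionSeq (m + 1) lam :=
  isPartitionSeq_succ_of_last_nonneg (fun i hi => (h i hi).2.trans (h i hi).1) hlast

lemma Interlaces.isPartitionSeq_right (h : Interlaces m lam mu) (hlast : 0 ≤ lam m) :
    IsPartitionSeq m mu :=
  ⟨fun i hi => (h (i + 1) hi).1.trans (h i (by lia)).2,
    fun i hi => ((h.isPartitionSeq_left hlast).2 (i + 1) (by lia)).trans (h i hi).2⟩

lemma IsPartitionSeq.indicator_succ_le (hlam : IsPartitionSeq k lam) {i : ℕ} (hi : i < k) :
    (Set.Iio k).indicator lam (i + 1) ≤ lam i := by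
  by_cases hik : i + 1 < k
  · rw [Set.indicator_of_mem (Set.mem_Iio.2 hik)]
    exact hlam.1 i hik
  · rw [Set.indicator_of_notMem (by simpa using hik)]
    exact hlam.2 i hi

/-- A finite integer sequence continued by zeros. -/
noncomputable def extendZero (v : Fin k → ℤ) : ℕ → ℤ :=
  Function.extend Fin.val v 0

@[simp]
lemma extendZero_apply (v : Fin k → ℤ) (i : Fin k) : extendZero v i = v i :=
  Fin.val_injective.extend_apply v 0 i

/-- The shapes `v` with at most `k` rows for which `lam / v` is a horizontal strip, that is, which
interlace `(lam 0, …, lam (k - 1), 0)`. -/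
noncomputable def innerShapes (k : ℕ) (lam : ℕ → ℤ) : Finset (Fin k → ℤ) :=
  Fintype.piFinset fun i => Icc ((Set.Iio k).indicator lam (i + 1)) (lam i)

lemma mem_innerShapes_iff {v : Fin k → ℤ} :
    v ∈ innerShapes k lam ↔ Interlaces k ((Set.Iio k).indicator lam) (extendZero v) := by
  rw [innerShapes, Fintype.mem_piFinset, Interlaces, Fin.forall_iff]
  refine forall₂_congr fun i hi => ?_
  have hvi : extendZero v i = v ⟨i, hi⟩ := extendZero_apply v ⟨i, hi⟩
  rw [mem_Icc, hvi, Set.indicator_of_mem (Set.mem_Iio.2 hi), and_comm]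

end Interlacing

section JacobiTrudi

variable {R : Type*}

/-- The `k × k` Jacobi–Trudi matrix `(H_{q_i - i + j})`, for an arbitrary sequence `H` in place of
the complete homogeneous polynomials and an arbitrary integer sequence `q`. -/
def jacobiTrudi (H : ℤ → R) (k : ℕ) (q : ℕ → ℤ) : Matrix (Fin k) (Fin k) R :=
  Matrix.of fun i j => H (q i - (i : ℕ) + (j : ℕ))

@[simp]
lemma jacobiTrudi_apply (H : ℤ → R) (k : ℕ) (q : ℕ → ℤ) (i j : Fin k) :
    jacobiTrudi H k q i j = H (q i - (i : ℕ) + (j : ℕ)) :=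
  rfl

/-- The sequence `λ^i` of the exchange identity, with indices starting at `0`. -/
def exchangeLeft (lam mu : ℕ → ℤ) (i : ℕ) : ℕ → ℤ :=
  fun j => if j < i then mu j - 1 else if j = i then lam i else mu (j - 1)

/-- The sequence `μ^i` of the exchange identity, with indices starting at `0`. -/
def exchangeRight (lam : ℕ → ℤ) (i : ℕ) : ℕ → ℤ :=
  fun j => if j < i then lam j + 1 else lam (j + 1)

lemma jacobiTrudi_exchangeLeft (H : ℤ → R) (m : ℕ) (lam mu : ℕ → ℤ) (i : Fin (m + 1)) :
    jacobiTrudi H (m + 1) (exchangeLeft lam mu i) =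
      Matrix.of (i.insertNth ((jacobiTrudi H (m + 1) lam).row i)
        fun (r : Fin m) (j : Fin (m + 1)) => H (mu r - 1 - (r : ℕ) + (j : ℕ))) := by
  ext r j
  rcases Fin.eq_self_or_eq_succAbove i r with rfl | ⟨r, rfl⟩
  · simp [exchangeLeft]
  · rcases lt_or_ge r.castSucc i with hr | hr
    · have hri : (r : ℕ) < i := hr
      simp only [jacobiTrudi_apply, Matrix.of_apply, Fin.insertNth_apply_succAbove]
      simp only [exchangeLeft, Fin.succAbove_of_castSucc_lt _ _ hr, Fin.val_castSucc, hri, if_true]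
    · have hri : (i : ℕ) ≤ r := hr
      simp only [jacobiTrudi_apply, Matrix.of_apply, Fin.insertNth_apply_succAbove]
      simp only [exchangeLeft, Fin.succAbove_of_le_castSucc _ _ hr, Fin.val_succ,
        show ¬(r : ℕ) + 1 < i by lia, show ¬(r : ℕ) + 1 = i by lia, if_false, Nat.add_sub_cancel]
      congr 1
      push_cast
      ring

lemma jacobiTrudi_exchangeRight (H : ℤ → R) (m : ℕ) (lam : ℕ → ℤ) (i : Fin (m + 1)) :
    jacobiTrudi H m (exchangeRight lam i) =
      (jacobiTrudi H (m + 1) lam).submatrix i.succAbove (Fin.succAbove 0) := by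
  ext r j
  simp only [jacobiTrudi_apply, Matrix.submatrix_apply, Fin.succAbove_zero, Fin.val_succ]
  congr 1
  rcases lt_or_ge r.castSucc i with hr | hr
  · have hri : (r : ℕ) < i := hr
    simp only [exchangeRight, Fin.succAbove_of_castSucc_lt _ _ hr, hri, if_true, Fin.val_castSucc]
    push_cast
    ring
  · have hri : ¬(r : ℕ) < i := not_lt.2 hr
    simp only [exchangeRight, Fin.succAbove_of_le_castSucc _ _ hr, hri, if_false, Fin.val_succ]
    push_cast
    ring

variable [CommRing R]

lemma det_jacobiTrudi_eq_zero (H : ℤ → R) {k : ℕ} {q : ℕ → ℤ} {i : ℕ} (hi : i + 1 < k)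
    (hq : q (i + 1) = q i + 1) : (jacobiTrudi H k q).det = 0 := by
  refine Matrix.det_zero_of_row_eq (i := ⟨i, by lia⟩) (j := ⟨i + 1, hi⟩) (by simp) ?_
  ext j
  simp [hq]

theorem det_jacobiTrudi_mul_det_jacobiTrudi (H : ℤ → R) (m : ℕ) (lam mu : ℕ → ℤ) :
    (jacobiTrudi H (m + 1) lam).det * (jacobiTrudi H m mu).det =
      ∑ i : Fin (m + 1), (jacobiTrudi H (m + 1) (exchangeLeft lam mu i)).det *
        (jacobiTrudi H m (exchangeRight lam i)).det := by
  have mu_minor : jacobiTrudi H m mu = (Matrix.of fun (r : Fin m) (j : Fin (m + 1)) =>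
      H (mu r - 1 - (r : ℕ) + (j : ℕ))).submatrix id (Fin.succAbove 0) := by
    ext r j
    simp only [jacobiTrudi_apply, Matrix.submatrix_apply, Matrix.of_apply, id, Fin.succAbove_zero,
      Fin.val_succ]
    congr 1
    push_cast
    ring
  simp_rw [mu_minor, jacobiTrudi_exchangeLeft, jacobiTrudi_exchangeRight]
  exact det_mul_det_submatrix_succAbove _ _ 0

lemma eq_sum_Icc_add_of_recurrence {H G : ℤ → R} {x : R} (hHG : ∀ m, H m = G m + x * H (m - 1))
    {l u : ℤ} (hlu : l ≤ u + 1) :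
    H u = ∑ t ∈ Icc l u, x ^ (u - t).toNat * G t + x ^ (u + 1 - l).toNat * H (l - 1) := by
  obtain ⟨u, rfl⟩ : ∃ w, u = w - 1 := ⟨u + 1, by ring⟩
  rw [sub_add_cancel] at *
  induction u, hlu using Int.leInduction with
  | base => simp
  | succ u hlu ih =>
    have pow_toNat_succ {t : ℤ} (ht : t ≤ u) : x ^ (u + 1 - t).toNat = x * x ^ (u - t).toNat := by
      rw [← pow_succ', show (u + 1 - t).toNat = (u - t).toNat + 1 by lia]
    have split_top : ∑ t ∈ Icc l u, x ^ (u - t).toNat * G t =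
        G u + x * ∑ t ∈ Icc l (u - 1), x ^ (u - 1 - t).toNat * G t := by
      rw [← insert_Icc_sub_one_right_eq_Icc hlu, sum_insert (by simp), sub_self, Int.toNat_zero,
        pow_zero, one_mul, mul_sum]
      congr 1
      refine sum_congr rfl fun t ht => ?_
      rw [← mul_assoc, ← pow_succ', show (u - t).toNat = (u - 1 - t).toNat + 1 by grind]
    rw [add_sub_cancel_right, hHG u, ih, split_top, pow_toNat_succ hlu]
    ring

/-- In row `i`, the part of `H` not expressed through `G` is a multiple of row `i + 1`, or zero in
the last row. -/
lemma det_jacobiTrudi_eq_det_sum {H G : ℤ → R} {x : R} (hHG : ∀ m, H m = G m + x * H (m - 1))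
    (hH : ∀ m < 0, H m = 0) {k : ℕ} {lam : ℕ → ℤ} (hlam : IsPartitionSeq k lam) :
    (jacobiTrudi H k lam).det =
      (Matrix.of fun i : Fin k => ∑ t ∈ Icc ((Set.Iio k).indicator lam (i + 1)) (lam i),
        fun j : Fin k => x ^ (lam i - t).toNat * G (t - (i : ℕ) + (j : ℕ))).det := by
  have row_expansion (i j : Fin k) : jacobiTrudi H k lam i j =
      (∑ t ∈ Icc ((Set.Iio k).indicator lam (i + 1)) (lam i),
        x ^ (lam i - t).toNat * G (t - (i : ℕ) + (j : ℕ))) +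
      x ^ (lam i + 1 - (Set.Iio k).indicator lam (i + 1)).toNat *
        H ((Set.Iio k).indicator lam (i + 1) - 1 - (i : ℕ) + (j : ℕ)) :=
    eq_sum_Icc_add_of_recurrence (H := fun t => H (t - (i : ℕ) + (j : ℕ)))
      (G := fun t => G (t - (i : ℕ) + (j : ℕ))) (fun t => by rw [hHG]; ring_nf)
      (by have := hlam.indicator_succ_le i.2; lia)
  cases k with
  | zero => simp
  | succ k =>
    refine det_eq_of_forall_row_eq_smul_add_succ
      (fun i => x ^ (lam i + 1 - lam (i + 1)).toNat) (fun j => ?_) fun i j => ?_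
    · have hlast : (Fin.last k : ℕ) + 1 ∉ Set.Iio (k + 1) := by simp
      have hj := j.is_le
      rw [row_expansion, Matrix.of_apply, Finset.sum_apply, Set.indicator_of_notMem hlast,
        hH _ (by rw [Fin.val_last]; lia), mul_zero, add_zero]
    · have hi : (i : ℕ) + 1 ∈ Set.Iio (k + 1) := by simp
      simp only [row_expansion i.castSucc, Matrix.of_apply, Finset.sum_apply, Fin.val_castSucc,
        Set.indicator_of_mem hi, jacobiTrudi_apply, Fin.val_succ, Nat.cast_succ]
      congr 3
      ring

lemma det_jacobiTrudi_eq_sum {H G : ℤ → R} {x : R} (hHG : ∀ m, H m = G m + x * H (m - 1))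
    (hH : ∀ m < 0, H m = 0) {k : ℕ} {lam : ℕ → ℤ} (hlam : IsPartitionSeq k lam) :
    (jacobiTrudi H k lam).det = ∑ v ∈ innerShapes k lam,
      (jacobiTrudi G k (extendZero v)).det * x ^ ∑ i : Fin k, (lam i - v i).toNat := by
  rw [det_jacobiTrudi_eq_det_sum hHG hH hlam, det_of_sum_rows]
  refine sum_congr rfl fun v _ => ?_
  rw [mul_comm, ← prod_pow_eq_pow_sum, ← Matrix.det_mul_column]
  simp only [jacobiTrudi_apply, extendZero_apply]

end JacobiTrudi

namespace SSYT

variable {k : ℕ} {lam v : ℕ → ℤ} {a b : ℕ}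

lemma entry_injective : Function.Injective (entry : SSYT k lam a b → ℕ → ℕ → ℕ) := by
  rintro ⟨_, _, _, _, _, _⟩ ⟨_, _, _, _, _, _⟩ rfl
  rfl

instance : Finite (SSYT k lam a b) := by
  let restrict (T : SSYT k lam a b) (i : Fin k) (j : Fin (lam i).toNat) : Fin (b + 1) :=
    ⟨T.entry i j, Nat.lt_succ_of_le (T.upper i j i.2 (by have := j.2; lia))⟩
  refine Finite.of_injective restrict fun T T' h => entry_injective ?_
  funext i j
  by_cases hij : i < k ∧ (j : ℤ) < lam i
  · simpa [restrict] using congrFun (congrFun h ⟨i, hij.1⟩) ⟨j, by lia⟩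
  · rw [T.zero_outside i j hij, T'.zero_outside i j hij]

noncomputable instance : Fintype (SSYT k lam a b) := Fintype.ofFinite _

/-- The tableau of shape `lam` obtained from `T` by filling the horizontal strip `lam / v` with the
new largest letter `b + 1`. -/
def fillStrip (T : SSYT k v a b) (hlam : IsPartitionSeq k lam)
    (hv : Interlaces k ((Set.Iio k).indicator lam) v) (hab : a ≤ b + 1) :
    SSYT k lam a (b + 1) where
  entry i j := if i < k ∧ v i ≤ j ∧ j < lam i then b + 1 else T.entry i j
  zero_outside i j hij := by
    have hvlam : i < k → v i ≤ lam i := fun hi => by simpa [hi] using (hv i hi).1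
    rw [if_neg (by tauto), T.zero_outside i j (by grind)]
  lower i j hi hj := by
    have := T.lower i j hi
    grind
  upper i j hi hj := by
    have := T.upper i j hi
    grind
  row_weak i j₁ j₂ hi hj hj₂ := by
    have := T.row_weak i j₁ j₂ hi hj
    have := T.upper i j₁ hi
    grind
  col_strict i₁ i₂ j hi hi₂ hj := by
    have hj₁ : j < v i₁ := calc
      (j : ℤ) < lam i₂ := hj
      _ ≤ lam (i₁ + 1) := hlam.le_of_le hi hi₂
      _ = (Set.Iio k).indicator lam (i₁ + 1) := by
        rw [Set.indicator_of_mem (Set.mem_Iio.2 (by lia))]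
      _ ≤ v i₁ := (hv i₁ (by lia)).2
    have := T.upper i₁ j (by lia) hj₁
    have := T.col_strict i₁ i₂ j hi hi₂
    grind

lemma fillStrip_entry (T : SSYT k v a b) (hlam : IsPartitionSeq k lam)
    (hv : Interlaces k ((Set.Iio k).indicator lam) v) (hab : a ≤ b + 1) (i j : ℕ) :
    (T.fillStrip hlam hv hab).entry i j =
      if i < k ∧ v i ≤ j ∧ j < lam i then b + 1 else T.entry i j :=
  rfl

lemma fillStrip_entry_le_iff (T : SSYT k v a b) (hlam : IsPartitionSeq k lam)
    (hv : Interlaces k ((Set.Iio k).indicator lam) v) (hab : a ≤ b + 1) {i j : ℕ} (hi : i < k)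
    (hj : j < lam i) : (T.fillStrip hlam hv hab).entry i j ≤ b ↔ j < v i := by
  have := T.upper i j hi
  grind [fillStrip_entry]

lemma fillStrip_injective (hlam : IsPartitionSeq k lam)
    (hv : Interlaces k ((Set.Iio k).indicator lam) v) (hab : a ≤ b + 1) :
    Function.Injective fun T : SSYT k v a b => T.fillStrip hlam hv hab := by
  intro T T' h
  refine entry_injective (funext₂ fun i j => ?_)
  by_cases hij : i < k ∧ (j : ℤ) < v i
  · simpa [fillStrip_entry, hij.2.not_ge] using congrFun₂ (congrArg entry h) i j
  · rw [T.zero_outside i j hij, T'.zero_outside i j hij]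

lemma weight_fillStrip (T : SSYT k v a b) (hlam : IsPartitionSeq k lam)
    (hv : Interlaces k ((Set.Iio k).indicator lam) v) (hab : a ≤ b + 1) :
    (T.fillStrip hlam hv hab).weight =
      T.weight * X (b + 1) ^ ∑ i ∈ range k, (lam i - v i).toNat := by
  rw [weight, weight, ← prod_pow_eq_pow_sum, ← prod_mul_distrib]
  refine prod_congr rfl fun i hi => ?_
  have hi := mem_range.1 hi
  have hvlam : v i ≤ lam i := by simpa [hi] using (hv i hi).1
  have hv0 : 0 ≤ v i := (hv.isPartitionSeq_right (by simp)).2 i hi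
  rw [← prod_range_mul_prod_Ico _ (Int.toNat_le_toNat hvlam)]
  congr 1
  · refine prod_congr rfl fun j hj => ?_
    rw [fillStrip_entry, if_neg (by grind)]
  · rw [prod_eq_pow_card (b := X (b + 1)) fun j hj => by rw [fillStrip_entry, if_pos (by grind)],
      Nat.card_Ico]
    congr 1
    lia

lemma exists_row_prefix (T : SSYT k lam a (b + 1)) {i : ℕ} (hi : i < k) :
    ∃ c : ℕ, ∀ j : ℕ, j < c ↔ j < lam i ∧ T.entry i j ≤ b := by
  have hex : ∃ j : ℕ, ¬(j < lam i ∧ T.entry i j ≤ b) := ⟨(lam i).toNat, by lia⟩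
  classical
  refine ⟨Nat.find hex, fun j => ?_⟩
  simp only [Nat.lt_find_iff, not_not]
  refine ⟨fun h => h j le_rfl, fun ⟨hj, hb⟩ j' hj' => ⟨by lia, ?_⟩⟩
  exact (T.row_weak i j' j hi hj' hj).trans hb

/-- The tableau of the entries of `T` that are at most `b`; these fill the shape `v`. -/
def restrict (T : SSYT k lam a (b + 1)) (hlam : IsPartitionSeq k lam)
    (hv : ∀ i < k, ∀ j : ℕ, j < v i ↔ j < lam i ∧ T.entry i j ≤ b) : SSYT k v a b where
  entry i j := if i < k ∧ j < v i then T.entry i j else 0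
  zero_outside i j hij := if_neg hij
  lower i j hi hj := by
    rw [if_pos ⟨hi, hj⟩]
    exact T.lower i j hi ((hv i hi j).1 hj).1
  upper i j hi hj := by
    rw [if_pos ⟨hi, hj⟩]
    exact ((hv i hi j).1 hj).2
  row_weak i j₁ j₂ hi hj hj₂ := by
    rw [if_pos ⟨hi, by lia⟩, if_pos ⟨hi, hj₂⟩]
    exact T.row_weak i j₁ j₂ hi hj ((hv i hi j₂).1 hj₂).1
  col_strict i₁ i₂ j hi hi₂ hj := by
    have hi₁ : i₁ < k := hi.trans hi₂
    obtain ⟨hj_lam, hj_le⟩ := (hv i₂ hi₂ j).1 hj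
    have hlt := T.col_strict i₁ i₂ j hi hi₂ hj_lam
    have hj₁ : j < v i₁ :=
      (hv i₁ hi₁ j).2 ⟨hj_lam.trans_le (hlam.le_of_le hi.le hi₂), hlt.le.trans hj_le⟩
    rwa [if_pos ⟨hi₁, hj₁⟩, if_pos ⟨hi₂, hj⟩]

lemma restrict_entry (T : SSYT k lam a (b + 1)) (hlam : IsPartitionSeq k lam)
    (hv : ∀ i < k, ∀ j : ℕ, j < v i ↔ j < lam i ∧ T.entry i j ≤ b) (i j : ℕ) :
    (T.restrict hlam hv).entry i j = if i < k ∧ j < v i then T.entry i j else 0 :=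
  rfl

lemma fillStrip_restrict (T : SSYT k lam a (b + 1)) (hlam : IsPartitionSeq k lam)
    (hv : ∀ i < k, ∀ j : ℕ, j < v i ↔ j < lam i ∧ T.entry i j ≤ b)
    (hv' : Interlaces k ((Set.Iio k).indicator lam) v) (hab : a ≤ b + 1) :
    (T.restrict hlam hv).fillStrip hlam hv' hab = T := by
  refine entry_injective (funext₂ fun i j => ?_)
  rw [fillStrip_entry, restrict_entry]
  have := T.upper i j
  have := T.zero_outside i j
  have := fun hi => hv i hi j
  clear hv
  grind

lemma interlaces_of_forall_lt_iff (T : SSYT k lam a (b + 1)) (hlam : IsPartitionSeq k lam)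
    (hv0 : ∀ i < k, 0 ≤ v i)
    (hv : ∀ i < k, ∀ j : ℕ, j < v i ↔ j < lam i ∧ T.entry i j ≤ b) :
    Interlaces k ((Set.Iio k).indicator lam) v := by
  intro i hi
  have hlam0 := hlam.2 i hi
  constructor
  · rw [Set.indicator_of_mem (Set.mem_Iio.2 hi)]
    by_contra! hlt
    have := (hv i hi (lam i).toNat).1 (by lia)
    lia
  · by_cases hi' : i + 1 < k
    · rw [Set.indicator_of_mem (Set.mem_Iio.2 hi')]
      by_contra! hlt
      obtain ⟨j, hj⟩ := Int.eq_ofNat_of_zero_le (hv0 i hi)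
      have hj' : j < lam (i + 1) := by lia
      have entry_lt := T.col_strict i (i + 1) j i.lt_succ_self hi' hj'
      have entry_le := T.upper (i + 1) j hi' hj'
      have := (hv i hi j).2 ⟨hj'.trans_le (hlam.1 i hi'), by lia⟩
      lia
    · rw [Set.indicator_of_notMem (by simpa using hi')]
      exact hv0 i hi

lemma shape_eq_of_fillStrip_eq {w : ℕ → ℤ} {T : SSYT k v a b} {T' : SSYT k w a b}
    {hlam : IsPartitionSeq k lam} {hv : Interlaces k ((Set.Iio k).indicator lam) v}
    {hw : Interlaces k ((Set.Iio k).indicator lam) w} {hab : a ≤ b + 1}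
    (h : T.fillStrip hlam hv hab = T'.fillStrip hlam hw hab) {i : ℕ} (hi : i < k) : v i = w i := by
  have lt_iff_lt (j : ℕ) (hj : j < lam i) : j < v i ↔ j < w i := by
    rw [← T.fillStrip_entry_le_iff hlam hv hab hi hj, h, fillStrip_entry_le_iff _ _ _ _ hi hj]
  have v_le : v i ≤ lam i := by simpa [hi] using (hv i hi).1
  have w_le : w i ≤ lam i := by simpa [hi] using (hw i hi).1
  have v_nonneg : 0 ≤ v i := (hv.isPartitionSeq_right (by simp)).2 i hi
  have w_nonneg : 0 ≤ w i := (hw.isPartitionSeq_right (by simp)).2 i hi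
  have := lt_iff_lt (v i).toNat
  have := lt_iff_lt (w i).toNat
  lia

lemma exists_fillStrip_eq (hlam : IsPartitionSeq k lam) (hab : a ≤ b + 1)
    (T : SSYT k lam a (b + 1)) : ∃ (v : Fin k → ℤ) (hv : v ∈ innerShapes k lam)
      (T' : SSYT k (extendZero v) a b),
      T'.fillStrip hlam (mem_innerShapes_iff.1 hv) hab = T := by
  choose c hc using fun i : Fin k => T.exists_row_prefix i.2
  let v : Fin k → ℤ := fun i => c i
  have hv_apply {i : ℕ} (hi : i < k) : extendZero v i = c ⟨i, hi⟩ := extendZero_apply v ⟨i, hi⟩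
  have hv (i : ℕ) (hi : i < k) (j : ℕ) : j < extendZero v i ↔ j < lam i ∧ T.entry i j ≤ b := by
    rw [hv_apply hi, Nat.cast_lt]
    exact hc ⟨i, hi⟩ j
  have hinter := T.interlaces_of_forall_lt_iff hlam (fun i hi => by rw [hv_apply hi]; lia) hv
  exact ⟨v, mem_innerShapes_iff.2 hinter, T.restrict hlam hv,
    T.fillStrip_restrict hlam hv hinter hab⟩

lemma fillStrip_bijective (hlam : IsPartitionSeq k lam) (hab : a ≤ b + 1) :
    Function.Bijective fun p : Σ v : innerShapes k lam, SSYT k (extendZero v.1) a b =>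
      p.2.fillStrip hlam (mem_innerShapes_iff.1 p.1.2) hab := by
  constructor
  · rintro ⟨⟨v, hv⟩, T⟩ ⟨⟨w, hw⟩, T'⟩ h
    obtain rfl : v = w := funext fun i => by simpa using shape_eq_of_fillStrip_eq h i.2
    obtain rfl : T = T' := fillStrip_injective hlam _ hab h
    rfl
  · intro T
    obtain ⟨v, hv, T', rfl⟩ := T.exists_fillStrip_eq hlam hab
    exact ⟨⟨⟨v, hv⟩, T'⟩, rfl⟩

end SSYT

section Schur

variable {k : ℕ} {lam : ℕ → ℤ} {a b : ℕ}

lemma schur_of_isPartitionSeq (hlam : IsPartitionSeq k lam) :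
    schur k lam a b = ∑ T : SSYT k lam a b, T.weight := by
  rw [schur, if_pos hlam, finsum_eq_sum_of_fintype]

lemma schur_of_not_isPartitionSeq (hlam : ¬IsPartitionSeq k lam) : schur k lam a b = 0 :=
  if_neg hlam

lemma schur_succ (hlam : IsPartitionSeq k lam) (hab : a ≤ b + 1) :
    schur k lam a (b + 1) = ∑ v ∈ innerShapes k lam,
      schur k (extendZero v) a b * X (b + 1) ^ ∑ i : Fin k, (lam i - v i).toNat := by
  rw [schur_of_isPartitionSeq hlam, ← (SSYT.fillStrip_bijective hlam hab).sum_comp,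
    Fintype.sum_sigma, ← sum_coe_sort (innerShapes k lam)]
  refine sum_congr rfl fun ⟨v, hv⟩ _ => ?_
  have hinter := mem_innerShapes_iff.1 hv
  rw [schur_of_isPartitionSeq (hinter.isPartitionSeq_right (by simp)), sum_mul]
  refine sum_congr rfl fun T _ => ?_
  rw [SSYT.weight_fillStrip, sum_range]
  simp only [extendZero_apply]

lemma schur_eq_one_of_forall_eq_zero (hlam : ∀ i < k, lam i = 0) : schur k lam a b = 1 := by
  have not_mem_shape (i j : ℕ) : ¬(i < k ∧ (j : ℤ) < lam i) := fun ⟨hi, hj⟩ => by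
    rw [hlam i hi] at hj
    lia
  let emptyTableau : SSYT k lam a b :=
    { entry := 0
      zero_outside := fun _ _ _ => rfl
      lower := fun i j hi hj => (not_mem_shape i j ⟨hi, hj⟩).elim
      upper := fun i j hi hj => (not_mem_shape i j ⟨hi, hj⟩).elim
      row_weak := fun i _ j hi _ hj => (not_mem_shape i j ⟨hi, hj⟩).elim
      col_strict := fun _ i j _ hi hj => (not_mem_shape i j ⟨hi, hj⟩).elim }
  have eq_emptyTableau (T : SSYT k lam a b) : T = emptyTableau :=
    SSYT.entry_injective (funext₂ fun i j => T.zero_outside i j (not_mem_shape i j))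
  rw [schur_of_isPartitionSeq ⟨fun i hi => by rw [hlam i (by lia), hlam _ hi],
    fun i hi => (hlam i hi).ge⟩, Fintype.sum_eq_single emptyTableau
      fun T hT => (hT (eq_emptyTableau T)).elim, SSYT.weight]
  exact prod_eq_one fun i hi => by simp [hlam i (mem_range.1 hi)]

lemma schur_eq_zero_of_lt (hab : b < a) {i : ℕ} (hi : i < k) (hlam : 0 < lam i) :
    schur k lam a b = 0 := by
  by_cases hpart : IsPartitionSeq k lam
  · rw [schur_of_isPartitionSeq hpart]
    refine sum_eq_zero fun T _ => ?_
    have := T.lower i 0 hi hlam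
    have := T.upper i 0 hi hlam
    lia
  · exact schur_of_not_isPartitionSeq hpart

lemma schur_eq_det_jacobiTrudi_of_lt (hab : b < a) (hlam : IsPartitionSeq k lam) :
    schur k lam a b = (jacobiTrudi (completeHomogeneous ℤ (∅ : Finset ℕ)) k lam).det := by
  by_cases hzero : ∀ i < k, lam i = 0
  · have : jacobiTrudi (completeHomogeneous ℤ (∅ : Finset ℕ)) k lam = 1 := by
      ext i j
      rw [jacobiTrudi_apply, completeHomogeneous_empty, hzero i i.2, Matrix.one_apply]
      congr 1
      grind
    rw [schur_eq_one_of_forall_eq_zero hzero, this, Matrix.det_one]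
  · push Not at hzero
    obtain ⟨i, hi, hne⟩ := hzero
    have hpos : 0 < lam i := lt_of_le_of_ne (hlam.2 i hi) hne.symm
    have : 0 < lam 0 := hpos.trans_le (hlam.le_of_le i.zero_le hi)
    rw [schur_eq_zero_of_lt hab hi hpos,
      Matrix.det_eq_zero_of_row_eq_zero (⟨0, i.zero_le.trans_lt hi⟩ : Fin k) fun j => ?_]
    rw [jacobiTrudi_apply, completeHomogeneous_empty, if_neg (by lia)]

theorem schur_eq_det_jacobiTrudi (ha : 1 ≤ a) (hlam : IsPartitionSeq k lam) :
    schur k lam a b = (jacobiTrudi (completeHomogeneous ℤ (Icc a b)) k lam).det := by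
  induction b generalizing lam with
  | zero => rw [Icc_eq_empty (by lia), schur_eq_det_jacobiTrudi_of_lt ha hlam]
  | succ b ih =>
    rcases lt_or_ge (b + 1) a with hba | hab
    · rw [Icc_eq_empty hba.not_ge, schur_eq_det_jacobiTrudi_of_lt hba hlam]
    · have recurrence (m : ℤ) : completeHomogeneous ℤ (Icc a (b + 1)) m =
          completeHomogeneous ℤ (Icc a b) m +
            X (b + 1) * completeHomogeneous ℤ (Icc a (b + 1)) (m - 1) := by
        rw [← insert_Icc_right_eq_Icc_add_one hab, completeHomogeneous_insert ℤ (by simp)]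
      rw [schur_succ hlam hab, det_jacobiTrudi_eq_sum recurrence
        (fun m hm => completeHomogeneous_of_neg ℤ _ hm) hlam]
      refine sum_congr rfl fun v hv => ?_
      rw [ih ((mem_innerShapes_iff.1 hv).isPartitionSeq_right (by simp))]

end Schur

section Exchange

variable {m a b : ℕ} {lam mu : ℕ → ℤ}

lemma IsPartitionSeq.isPartitionSeq_exchangeRight (hlam : IsPartitionSeq (m + 1) lam) (i : ℕ) :
    IsPartitionSeq m (exchangeRight lam i) := by
  refine ⟨fun j hj => ?_, fun j hj => ?_⟩
  · have := hlam.1 j (by lia)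
    have := hlam.1 (j + 1) (by lia)
    grind [exchangeRight]
  · have := hlam.2 j (by lia)
    have := hlam.2 (j + 1) (by lia)
    grind [exchangeRight]

lemma Interlaces.isPartitionSeq_exchangeLeft (h : Interlaces m lam mu) (hlast : 0 ≤ lam m)
    {i : ℕ} (hi : i ≤ m) (hlt : ∀ j, j + 1 = i → lam i < mu j) :
    IsPartitionSeq (m + 1) (exchangeLeft lam mu i) := by
  have hmu := h.isPartitionSeq_right hlast
  refine isPartitionSeq_succ_of_last_nonneg (fun j hj => ?_) ?_
  · have := h j hj
    have := hmu.1 j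
    have := hmu.1 (j - 1)
    have := hlt j
    grind [exchangeLeft]
  · have := hmu.2 (m - 1)
    grind [exchangeLeft]

lemma schur_exchangeLeft (ha : 1 ≤ a) (h : Interlaces m lam mu) (hlast : 0 ≤ lam m) {i : ℕ}
    (hi : i ≤ m) : schur (m + 1) (exchangeLeft lam mu i) a b =
      (jacobiTrudi (completeHomogeneous ℤ (Icc a b)) (m + 1) (exchangeLeft lam mu i)).det := by
  by_cases hlt : ∀ j, j + 1 = i → lam i < mu j
  · exact schur_eq_det_jacobiTrudi ha (h.isPartitionSeq_exchangeLeft hlast hi hlt)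
  · push Not at hlt
    obtain ⟨j, rfl, hle⟩ := hlt
    have heq : exchangeLeft lam mu (j + 1) (j + 1) = exchangeLeft lam mu (j + 1) j + 1 := by
      have := (h j hi).2
      grind [exchangeLeft]
    rw [det_jacobiTrudi_eq_zero _ (by lia) heq, schur_of_not_isPartitionSeq]
    intro hpart
    have := hpart.1 j (by lia)
    lia

theorem stmt_18_general (ha : 1 ≤ a) (h : Interlaces m lam mu) (hlast : 0 ≤ lam m) :
    schur (m + 1) lam a b * schur m mu a b =
      ∑ i ∈ range (m + 1), schur (m + 1) (exchangeLeft lam mu i) a b *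
        schur m (exchangeRight lam i) a b := by
  have hlam := h.isPartitionSeq_left hlast
  rw [schur_eq_det_jacobiTrudi ha hlam,
    schur_eq_det_jacobiTrudi ha (h.isPartitionSeq_right hlast),
    det_jacobiTrudi_mul_det_jacobiTrudi, sum_range]
  refine sum_congr rfl fun i _ => ?_
  rw [schur_exchangeLeft ha h hlast i.is_le,
    schur_eq_det_jacobiTrudi ha (hlam.isPartitionSeq_exchangeRight i)]

end Exchange

/-- let `λ` (with `k` parts) and `μ` (with `k-1` parts) be interlacing
partitions, i.e. `λ_i ≥ μ_i ≥ λ_{i+1}`.  With `λ^i`, `μ^i` defined by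
`λ^i_j = μ_j - 1` for `j < i`, `λ^i_i = λ_i`, `λ^i_j = μ_{j-1}` for `j > i`, and
`μ^i_j = λ_j + 1` for `j < i`, `μ^i_j = λ_{j+1}` for `j ≥ i`, one has
`s^{[n]}_λ · s^{[n]}_μ = Σ_{i=1}^{k} s^{[n]}_{λ^i} · s^{[n]}_{μ^i}`
(with `s^{[n]}_α = 0` when `α` is not a partition, built into `schur`). -/
theorem stmt_18 (k n : ℕ) (hk : 1 ≤ k) (hn : 1 ≤ n) (lam mu : ℕ → ℤ)
    (hlam : ∀ i, i + 1 < k → lam (i + 1) ≤ lam i) (hlampos : ∀ i, i < k → 0 ≤ lam i)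
    (hmu : ∀ i, i + 1 < k - 1 → mu (i + 1) ≤ mu i) (hmupos : ∀ i, i < k - 1 → 0 ≤ mu i)
    (hinter : ∀ i, i < k - 1 → mu i ≤ lam i ∧ lam (i + 1) ≤ mu i) :
    schur k lam 1 n * schur (k - 1) mu 1 n =
      ∑ i ∈ Finset.range k,
        schur k
            (fun j => if j < i then mu j - 1 else if j = i then lam i else mu (j - 1)) 1 n *
          schur (k - 1) (fun j => if j < i then lam j + 1 else lam (j + 1)) 1 n := by
  obtain ⟨m, rfl⟩ := Nat.exists_eq_add_of_le' hk
  exact stmt_18_general le_rfl hinter (hlampos m m.lt_succ_self)
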